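/- arXiv:1007.1375 — 2 statements merged into one kernel-verified Lean document; each statement's English description precedes it below -/
import Mathlib

section
/- For every even natural number n > 2, there exists a finite 3-bounded set V of points in the real plane ℝ², not all contained in a single line, a simple line L_{a,b} of V, and a closed orbit for L_{a,b} of length n. -/
/-- `L_{a,b}` is a simple line of `V`: `a, b` are distinct points of `V` and no
point of `V` other than `a` and `b` is collinear with `a` and `b`. -/
def SimpleLine (V : Set (ℝ × ℝ)) (a b : ℝ × ℝ) : Prop :=
  a ∈ V ∧ b ∈ V ∧ a ≠ b ∧
    ∀ c ∈ V, Collinear ℝ ({a, b, c} : Set (ℝ × ℝ)) → c = a ∨ c = b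

/-- `V` is 3-bounded: for all distinct `a, b ∈ V`, at most `3` points of `V`
are collinear with `a` and `b`. -/
def ThreeBounded (V : Set (ℝ × ℝ)) : Prop :=
  ∀ a ∈ V, ∀ b ∈ V, a ≠ b →
    ({c ∈ V | Collinear ℝ ({a, b, c} : Set (ℝ × ℝ))}).ncard ≤ 3

/-- `x 0, x 1, …, x (t-1)` (corresponding to `x_1, …, x_t`, so `1 ≤ t`) is an
orbit of the simple line `L_{a,b}` in `V`:
(ℵ) each `x i` is a point of `V` different from `a` and `b`;
(ℶ) the points `x_1, …, x_{t-1}` are pairwise distinct;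
(ℷ)/(ℸ) consecutive points are joined alternately through `b` and `a`:
`x_{2m}` is collinear with `b` and `x_{2m-1}`, and `x_{2m+1}` is collinear with
`a` and `x_{2m}` (in the `0`-based indexing below, `x (k+1)` is collinear with
`b` and `x k` for even `k`, and with `a` and `x k` for odd `k`). -/
def IsOrbit (V : Set (ℝ × ℝ)) (a b : ℝ × ℝ) (t : ℕ) (x : ℕ → ℝ × ℝ) : Prop :=
  1 ≤ t ∧
  (∀ i < t, x i ∈ V ∧ x i ≠ a ∧ x i ≠ b) ∧
  (∀ i < t - 1, ∀ j < t - 1, i ≠ j → x i ≠ x j) ∧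
  ∀ k, k + 1 < t →
    (Even k → Collinear ℝ ({b, x k, x (k + 1)} : Set (ℝ × ℝ))) ∧
    (Odd k → Collinear ℝ ({a, x k, x (k + 1)} : Set (ℝ × ℝ)))

/-- An orbit is open if `t = 1`, or `t > 1` and its first and last points differ. -/
def OpenOrbit (V : Set (ℝ × ℝ)) (a b : ℝ × ℝ) (t : ℕ) (x : ℕ → ℝ × ℝ) : Prop :=
  IsOrbit V a b t x ∧ (t = 1 ∨ (1 < t ∧ x 0 ≠ x (t - 1)))

/-- An orbit is closed if `t > 1` and its first and last points coincide. -/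
def ClosedOrbit (V : Set (ℝ × ℝ)) (a b : ℝ × ℝ) (t : ℕ) (x : ℕ → ℝ × ℝ) : Prop :=
  IsOrbit V a b t x ∧ 1 < t ∧ x 0 = x (t - 1)

/-- An orbit is maximal if it cannot be extended by one more point of `V`. -/
def MaximalOrbit (V : Set (ℝ × ℝ)) (a b : ℝ × ℝ) (t : ℕ) (x : ℕ → ℝ × ℝ) : Prop :=
  IsOrbit V a b t x ∧ ¬ ∃ y ∈ V, IsOrbit V a b (t + 1) (Function.update x t y)

/-!
The map `θ ↦ (cot θ, cot² θ)` parametrizes the parabola `y = x²` by the nonzero elements of `ℝ/πℤ`,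
and by the addition formula for `cot` the chord joining the points of angles `θ` and `φ` meets the
line `y = -1` at `(cot (θ + φ), -1)`. Projecting the parabola to itself through a point of that line
is therefore a reflection `θ ↦ σ - θ`. For even `n`, the reflections with `σ = -π/n` and `σ = π/n`
generate a dihedral group of order `n` modulo `π`, so applying them alternately to an angle fixed by
no reflection of the group gives a closed orbit of length `n`. No line meets the parabola in three
points, and the line `y = -1` through the two centres of projection misses it, so adding the two
centres keeps the set `3`-bounded.
-/

section Arcs

open AffineSubspace

variable {k V P : Type*} [DivisionRing k] [AddCommGroup V] [Module k V] [AddTorsor V P]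

variable (k) in
/-- An arc, in the sense of finite geometry: a set of points no three of which are collinear. -/
def IsArc (s : Set P) : Prop :=
  ∀ p ∈ s, ∀ q ∈ s, ∀ r ∈ s, Collinear k {p, q, r} → p = q ∨ p = r ∨ q = r

theorem IsArc.mono {s t : Set P} (ht : IsArc k t) (hst : s ⊆ t) : IsArc k s :=
  fun p hp q hq r hr ↦ ht p (hst hp) q (hst hq) r (hst hr)

theorem IsArc.encard_inter_line_le_two {s : Set P} (hs : IsArc k s) (p q : P) :
    (s ∩ line[k, p, q]).encard ≤ 2 := by
  by_contra! h
  obtain ⟨t, hts, ht⟩ := Set.exists_subset_encard_eq (Order.add_one_le_of_lt h)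
  obtain ⟨u, v, w, huv, huw, hvw, rfl⟩ := Set.encard_eq_three.1 (ht.trans two_add_one_eq_three)
  simp only [Set.insert_subset_iff, Set.singleton_subset_iff] at hts
  obtain ⟨⟨hu, hul⟩, ⟨hv, hvl⟩, ⟨hw, hwl⟩⟩ := hts
  have huvw : Collinear k {u, v, w} := collinear_triple_of_mem_affineSpan_pair hul hvl hwl
  rcases hs u hu v hv w hw huvw with h | h | h
  exacts [huv h, huw h, hvw h]

theorem IsArc.encard_pair_union_inter_line_le_three {s : Set P} (hs : IsArc k s) {a b : P}
    (hab : ∀ c ∈ s, ¬ Collinear k {a, b, c}) (p q : P) :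
    (({a, b} ∪ s) ∩ line[k, p, q]).encard ≤ 3 := by
  have insert_le (c : P) : (insert c (s ∩ line[k, p, q])).encard ≤ 3 :=
    (Set.encard_insert_le _ c).trans (by grw [hs.encard_inter_line_le_two p q]; rfl)
  by_cases ha : a ∈ line[k, p, q]
  · by_cases hb : b ∈ line[k, p, q]
    · have hsub : ({a, b} ∪ s) ∩ line[k, p, q] ⊆ {a, b} := by
        rintro c ⟨hc | hc, hcl⟩
        · exact hc
        · exact absurd (collinear_triple_of_mem_affineSpan_pair ha hb hcl) (hab c hc)
      exact (Set.encard_le_encard hsub).trans ((Set.encard_insert_le _ a).trans (by norm_num))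
    · refine (Set.encard_le_encard ?_).trans (insert_le a)
      rintro c ⟨(rfl | rfl) | hc, hcl⟩
      exacts [.inl rfl, absurd hcl hb, .inr ⟨hc, hcl⟩]
  · refine (Set.encard_le_encard ?_).trans (insert_le b)
    rintro c ⟨(rfl | rfl) | hc, hcl⟩
    exacts [absurd hcl ha, .inl rfl, .inr ⟨hc, hcl⟩]

end Arcs

theorem IsArc.threeBounded_pair_union {s : Set (ℝ × ℝ)} (hs : IsArc ℝ s) {a b : ℝ × ℝ}
    (hab : ∀ c ∈ s, ¬ Collinear ℝ {a, b, c}) : ThreeBounded ({a, b} ∪ s) := by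
  intro p _ q _ hpq
  have hsub : {c ∈ {a, b} ∪ s | Collinear ℝ {p, q, c}} ⊆ ({a, b} ∪ s) ∩ line[ℝ, p, q] :=
    fun c ⟨hc, hpqc⟩ ↦ ⟨hc, hpqc.mem_affineSpan_of_mem_of_ne (by simp) (by simp) (by simp) hpq⟩
  have hle := (Set.encard_le_encard hsub).trans (hs.encard_pair_union_inter_line_le_three hab p q)
  exact (Set.encard_le_coe_iff_finite_ncard_le.1 hle).2

theorem simpleLine_pair_union {s : Set (ℝ × ℝ)} {a b : ℝ × ℝ} (hne : a ≠ b)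
    (hab : ∀ c ∈ s, ¬ Collinear ℝ {a, b, c}) : SimpleLine ({a, b} ∪ s) a b := by
  refine ⟨by simp, by simp, hne, ?_⟩
  rintro c (hc | hc) habc
  exacts [hc, absurd habc (hab c hc)]

theorem SimpleLine.not_collinear {V : Set (ℝ × ℝ)} {a b c : ℝ × ℝ} (h : SimpleLine V a b)
    (hc : c ∈ V) (hca : c ≠ a) (hcb : c ≠ b) : ¬ Collinear ℝ V := by
  obtain ⟨ha, hb, -, honly⟩ := h
  intro hV
  have habc : {a, b, c} ⊆ V := by simp [Set.insert_subset_iff, ha, hb, hc]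
  exact (honly c hc (hV.subset habc)).elim hca hcb

section Coordinates

variable {k : Type*} [Field k]

theorem collinear_prod_iff {p q r : k × k} :
    Collinear k {p, q, r} ↔ (q.1 - p.1) * (r.2 - p.2) = (r.1 - p.1) * (q.2 - p.2) := by
  constructor
  · intro h
    obtain ⟨v, hv⟩ := (collinear_iff_of_mem (p₀ := p) (by simp)).1 h
    obtain ⟨s, rfl⟩ := hv q (by simp)
    obtain ⟨t, rfl⟩ := hv r (by simp)
    simp only [vadd_eq_add, Prod.fst_add, Prod.snd_add, Prod.smul_fst, Prod.smul_snd, smul_eq_mul]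
    ring
  · intro h
    by_cases hpq : p = q
    · simpa [hpq] using collinear_pair k q r
    obtain ⟨c, hc₁, hc₂⟩ : ∃ c, c * (q.1 - p.1) = r.1 - p.1 ∧ c * (q.2 - p.2) = r.2 - p.2 := by
      by_cases h₁ : q.1 - p.1 = 0
      · have h₂ : q.2 - p.2 ≠ 0 := fun h₂ ↦
          hpq (Prod.ext (sub_eq_zero.1 h₁).symm (sub_eq_zero.1 h₂).symm)
        refine ⟨(r.2 - p.2) / (q.2 - p.2), ?_, div_mul_cancel₀ _ h₂⟩
        field_simp
        linear_combination h
      · refine ⟨(r.1 - p.1) / (q.1 - p.1), div_mul_cancel₀ _ h₁, ?_⟩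
        field_simp
        linear_combination -h
    have hr : r = c • (q - p) +ᵥ p := Prod.ext (by simp [hc₁]) (by simp [hc₂])
    rw [collinear_iff_of_mem (p₀ := p) (by simp)]
    refine ⟨q - p, ?_⟩
    rintro _ (rfl | rfl | rfl)
    exacts [⟨0, by simp⟩, ⟨1, by simp⟩, ⟨c, hr⟩]

theorem isArc_parabola : IsArc k {p : k × k | p.2 = p.1 ^ 2} := by
  intro p (hp : p.2 = p.1 ^ 2) q (hq : q.2 = q.1 ^ 2) r (hr : r.2 = r.1 ^ 2) h
  rw [collinear_prod_iff, hp, hq, hr] at h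
  have hprod : (p.1 - q.1) * ((p.1 - r.1) * (q.1 - r.1)) = 0 := by linear_combination -h
  simp only [mul_eq_zero, sub_eq_zero] at hprod
  rcases hprod with h | h | h <;> simp [Prod.ext_iff, hp, hq, hr, h]

theorem collinear_horizontal_iff {u v w : k} (huv : u ≠ v) {p : k × k} :
    Collinear k {(u, w), (v, w), p} ↔ p.2 = w := by
  simp [collinear_prod_iff, sub_eq_zero, huv.symm]

end Coordinates

open Real

theorem cot_add_mul_cot_add_cot {θ φ : ℝ} (hθ : sin θ ≠ 0) (hφ : sin φ ≠ 0)
    (hθφ : sin (θ + φ) ≠ 0) : cot (θ + φ) * (cot θ + cot φ) = cot θ * cot φ - 1 := by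
  have hsum : cot θ + cot φ = sin (θ + φ) / (sin θ * sin φ) := by
    rw [cot_eq_cos_div_sin, cot_eq_cos_div_sin, sin_add]
    field_simp
    ring
  rw [hsum, cot_eq_cos_div_sin (θ + φ), cos_add, cot_eq_cos_div_sin, cot_eq_cos_div_sin]
  field_simp

theorem sin_sub_eq_zero_of_cot_eq {θ φ : ℝ} (hθ : sin θ ≠ 0) (hφ : sin φ ≠ 0)
    (h : cot θ = cot φ) : sin (θ - φ) = 0 := by
  rw [cot_eq_cos_div_sin, cot_eq_cos_div_sin, div_eq_div_iff hθ hφ] at h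
  rw [sin_sub]
  linear_combination -h

theorem cot_add_pi (θ : ℝ) : cot (θ + π) = cot θ := by
  rw [cot_eq_cos_div_sin, cot_eq_cos_div_sin, cos_add_pi, sin_add_pi, neg_div_neg_eq]

theorem sin_int_mul_pi_div_eq_zero_iff {N : ℕ} (hN : N ≠ 0) {m : ℤ} :
    sin (m * (π / N)) = 0 ↔ (N : ℤ) ∣ m := by
  have hN' : (N : ℝ) ≠ 0 := by exact_mod_cast hN
  have hmul (l : ℤ) : l * π = m * (π / N) ↔ m = N * l := by
    rw [mul_div_left_comm, mul_comm (l : ℝ), mul_right_inj' pi_ne_zero, eq_div_iff hN',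
      mul_comm, eq_comm]
    norm_cast
  simp only [sin_eq_zero_iff, hmul, dvd_def]

/-- The point of the parabola `y = x²` with angle `θ`. For `θ` a multiple of `π` the point is
at infinity, and the junk value `cot θ = 0` gives the vertex instead. -/
noncomputable def parabolaPoint (θ : ℝ) : ℝ × ℝ := (cot θ, cot θ ^ 2)

/-- The point of the line `y = -1` through which pass the chords of the parabola `y = x²` whose
endpoints have angles with sum `σ`, for `σ` not a multiple of `π`. -/
noncomputable def chordCenter (σ : ℝ) : ℝ × ℝ := (cot σ, -1)

theorem parabolaPoint_ne_chordCenter (θ σ : ℝ) : parabolaPoint θ ≠ chordCenter σ := fun h ↦ by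
  have hsq : cot θ ^ 2 = -1 := congrArg Prod.snd h
  linarith [sq_nonneg (cot θ)]

theorem collinear_chordCenter {θ φ : ℝ} (hθ : sin θ ≠ 0) (hφ : sin φ ≠ 0)
    (hθφ : sin (θ + φ) ≠ 0) :
    Collinear ℝ {chordCenter (θ + φ), parabolaPoint θ, parabolaPoint φ} := by
  simp only [collinear_prod_iff, chordCenter, parabolaPoint]
  linear_combination (cot θ - cot φ) * cot_add_mul_cot_add_cot hθ hφ hθφ

theorem not_collinear_chordCenter_parabolaPoint {σ τ : ℝ} (h : cot σ ≠ cot τ) (θ : ℝ) :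
    ¬ Collinear ℝ {chordCenter σ, chordCenter τ, parabolaPoint θ} := by
  rw [chordCenter, chordCenter, collinear_horizontal_iff h, parabolaPoint]
  linarith [sq_nonneg (cot θ)]

/-- The angles visited by the orbit, in units of `π / (4n)`. They alternate in sign so that
consecutive ones add up to `±4`, and the offset `1` makes the residue of `zigzag k` modulo `4`
reveal the parity of `k`. -/
def zigzag (k : ℕ) : ℤ := (-1) ^ k * (4 * k + 1)

theorem zigzag_of_even {k : ℕ} (hk : Even k) : zigzag k = 4 * k + 1 := by
  rw [zigzag, hk.neg_one_pow, one_mul]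

theorem zigzag_of_odd {k : ℕ} (hk : Odd k) : zigzag k = -(4 * k + 1) := by
  rw [zigzag, hk.neg_one_pow, neg_one_mul]

theorem zigzag_add_zigzag_succ_of_even {k : ℕ} (hk : Even k) :
    zigzag k + zigzag (k + 1) = -4 := by
  rw [zigzag_of_even hk, zigzag_of_odd hk.add_one]
  push_cast
  ring

theorem zigzag_add_zigzag_succ_of_odd {k : ℕ} (hk : Odd k) : zigzag k + zigzag (k + 1) = 4 := by
  rw [zigzag_of_odd hk, zigzag_of_even hk.add_one]
  push_cast
  ring

theorem not_four_mul_dvd_zigzag (n : ℤ) (k : ℕ) : ¬ 4 * n ∣ zigzag k := by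
  intro h
  have h4 : (4 : ℤ) ∣ zigzag k := dvd_of_mul_right_dvd h
  rcases Nat.even_or_odd k with hk | hk
  · rw [zigzag_of_even hk] at h4
    omega
  · rw [zigzag_of_odd hk] at h4
    omega

theorem eq_of_four_mul_dvd_zigzag_sub {n i j : ℕ} (hi : i < n) (hj : j < n)
    (h : 4 * (n : ℤ) ∣ zigzag i - zigzag j) : i = j := by
  have h4 : (4 : ℤ) ∣ zigzag i - zigzag j := dvd_of_mul_right_dvd h
  have eq_of_dvd (hdvd : 4 * (n : ℤ) ∣ 4 * ((i : ℤ) - j)) : i = j := by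
    have hdvd' : (n : ℤ) ∣ (i : ℤ) - j := Int.dvd_of_mul_dvd_mul_left four_ne_zero hdvd
    have hsub := Int.eq_zero_of_abs_lt_dvd hdvd' (by rw [abs_lt]; omega)
    omega
  rcases Nat.even_or_odd i with hi' | hi' <;> rcases Nat.even_or_odd j with hj' | hj' <;>
    simp only [zigzag_of_even, zigzag_of_odd, hi', hj'] at h h4
  · rw [add_sub_add_right_eq_sub, ← mul_sub] at h
    exact eq_of_dvd h
  · omega
  · omega
  · rw [neg_sub_neg, dvd_sub_comm, add_sub_add_right_eq_sub, ← mul_sub] at h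
    exact eq_of_dvd h

/-- The `k`-th point, counted from `0`, of the orbit of length `n` alternating between the chord
centers of `-π / n` and `π / n`. -/
noncomputable def orbitPoint (n k : ℕ) : ℝ × ℝ := parabolaPoint (zigzag k * (π / (4 * n : ℕ)))

theorem sin_zigzag_ne_zero {n : ℕ} (hn : n ≠ 0) (k : ℕ) :
    sin (zigzag k * (π / (4 * n : ℕ))) ≠ 0 := by
  rw [Ne, sin_int_mul_pi_div_eq_zero_iff (by simpa)]
  exact_mod_cast not_four_mul_dvd_zigzag n k

theorem orbitPoint_injOn (n : ℕ) : Set.InjOn (orbitPoint n) (Set.Iio n) := by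
  intro i hi j hj h
  have hn : n ≠ 0 := Nat.ne_zero_of_lt hi
  have hsin := sin_sub_eq_zero_of_cot_eq (sin_zigzag_ne_zero hn i) (sin_zigzag_ne_zero hn j)
    (congrArg Prod.fst h)
  rw [← sub_mul, ← Int.cast_sub, sin_int_mul_pi_div_eq_zero_iff (by simpa)] at hsin
  exact eq_of_four_mul_dvd_zigzag_sub hi hj (by exact_mod_cast hsin)

theorem orbitPoint_self {n : ℕ} (hn : Even n) (h0 : n ≠ 0) : orbitPoint n n = orbitPoint n 0 := by
  have hangle : zigzag n * (π / (4 * n : ℕ)) = zigzag 0 * (π / (4 * n : ℕ)) + π := by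
    rw [zigzag_of_even hn, zigzag_of_even Even.zero]
    push_cast
    field_simp
    ring
  rw [orbitPoint, orbitPoint, hangle, parabolaPoint, cot_add_pi, parabolaPoint]

theorem isArc_image_orbitPoint (n : ℕ) (s : Set ℕ) : IsArc ℝ (orbitPoint n '' s) :=
  isArc_parabola.mono (by rintro _ ⟨k, -, rfl⟩; rfl)

theorem sin_pi_div_ne_zero {n : ℕ} (hn : 1 < n) : sin (π / n) ≠ 0 :=
  (sin_pos_of_pos_of_lt_pi (by positivity) (div_lt_self pi_pos (by exact_mod_cast hn))).ne'

theorem cot_pi_div_ne_cot_neg {n : ℕ} (hn : 2 < n) : cot (π / n) ≠ cot (-(π / n)) := by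
  intro h
  have hsin : sin (π / n) ≠ 0 := sin_pi_div_ne_zero (by omega)
  have hsub := sin_sub_eq_zero_of_cot_eq hsin (by rwa [sin_neg, neg_ne_zero]) h
  have hangle : π / n - -(π / n) = (2 : ℤ) * (π / n) := by
    push_cast
    ring
  rw [hangle, sin_int_mul_pi_div_eq_zero_iff (by omega)] at hsub
  have hle := Int.le_of_dvd two_pos hsub
  omega

theorem collinear_orbitPoint_succ {n k : ℕ} (hn : n ≠ 0) {σ : ℝ} (hσ : sin σ ≠ 0)
    (hsum : ((zigzag k + zigzag (k + 1) : ℤ) : ℝ) * (π / (4 * n : ℕ)) = σ) :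
    Collinear ℝ {chordCenter σ, orbitPoint n k, orbitPoint n (k + 1)} := by
  rw [Int.cast_add, add_mul] at hsum
  subst hsum
  exact collinear_chordCenter (sin_zigzag_ne_zero hn _) (sin_zigzag_ne_zero hn _) hσ

theorem collinear_orbitPoint_succ_of_even {n k : ℕ} (hn : 1 < n) (hk : Even k) :
    Collinear ℝ {chordCenter (-(π / n)), orbitPoint n k, orbitPoint n (k + 1)} := by
  have hσ : sin (-(π / n)) ≠ 0 := by simpa only [sin_neg, neg_ne_zero] using sin_pi_div_ne_zero hn
  refine collinear_orbitPoint_succ (by omega) hσ ?_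
  rw [zigzag_add_zigzag_succ_of_even hk]
  push_cast
  field_simp

theorem collinear_orbitPoint_succ_of_odd {n k : ℕ} (hn : 1 < n) (hk : Odd k) :
    Collinear ℝ {chordCenter (π / n), orbitPoint n k, orbitPoint n (k + 1)} := by
  refine collinear_orbitPoint_succ (by omega) (sin_pi_div_ne_zero hn) ?_
  rw [zigzag_add_zigzag_succ_of_odd hk]
  push_cast
  field_simp

theorem isOrbit_orbitPoint {V : Set (ℝ × ℝ)} {n : ℕ} (hn : 1 < n)
    (hV : ∀ k < n + 1, orbitPoint n k ∈ V) :
    IsOrbit V (chordCenter (π / n)) (chordCenter (-(π / n))) (n + 1) (orbitPoint n) := by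
  refine ⟨by omega, fun k hk ↦ ⟨hV k hk, ?_, ?_⟩, fun i hi j hj hij h ↦ ?_, fun k _ ↦ ⟨?_, ?_⟩⟩
  · exact parabolaPoint_ne_chordCenter _ _
  · exact parabolaPoint_ne_chordCenter _ _
  · exact hij (orbitPoint_injOn n hi hj h)
  · exact collinear_orbitPoint_succ_of_even hn
  · exact collinear_orbitPoint_succ_of_odd hn

/-- For every even `n > 2` there is a finite `3`-bounded
non-collinear set `V`, a simple line `L_{a,b}` of `V`, and a closed orbit for
`L_{a,b}` of length `n` (i.e. with `t - 1 = n`). -/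
theorem closed_orbit_of_every_even_length (n : ℕ) (hn : Even n) (h2 : 2 < n) :
    ∃ V : Set (ℝ × ℝ), V.Finite ∧ ThreeBounded V ∧ ¬ Collinear ℝ V ∧
      ∃ a b, SimpleLine V a b ∧ ∃ t x, ClosedOrbit V a b t x ∧ t - 1 = n := by
  set a := chordCenter (π / n)
  set b := chordCenter (-(π / n))
  set s := orbitPoint n '' Set.Iio (n + 1)
  have hcot : cot (π / n) ≠ cot (-(π / n)) := cot_pi_div_ne_cot_neg h2
  have hne : a ≠ b := fun h ↦ hcot (congrArg Prod.fst h)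
  have hab : ∀ c ∈ s, ¬ Collinear ℝ {a, b, c} := by
    rintro _ ⟨k, -, rfl⟩
    exact not_collinear_chordCenter_parabolaPoint hcot _
  have hmem : ∀ k < n + 1, orbitPoint n k ∈ {a, b} ∪ s := fun k hk ↦ .inr ⟨k, hk, rfl⟩
  have hsimple : SimpleLine ({a, b} ∪ s) a b := simpleLine_pair_union hne hab
  refine ⟨{a, b} ∪ s, (Set.toFinite _).union ((Set.finite_Iio _).image _),
    (isArc_image_orbitPoint n _).threeBounded_pair_union hab,
    hsimple.not_collinear (hmem 0 n.succ_pos) (parabolaPoint_ne_chordCenter _ _)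
      (parabolaPoint_ne_chordCenter _ _),
    a, b, hsimple, n + 1, orbitPoint n, ⟨isOrbit_orbitPoint (by omega) hmem, by omega, ?_⟩, rfl⟩
  exact (orbitPoint_self hn (by omega)).symm
end

section
/- (Gallai–Sylvester) Let V be a finite set of at least 3 points in the real plane ℝ², not all contained in a single line. Then V spans a simple line: there exist distinct points a, b ∈ V such that no point of V other than a and b is collinear with a and b. -/
/-! Kelly's argument: among the noncollinear triples `p, a, b` of points of the set, take one whose
altitude from `p` is shortest. If the line `ab` contained a third point of the set, let `x` be the
one of the three lying between the other two. The directions from `x` to these two are opposite, so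
one of them, say `y`, makes the angle `p x y` right or obtuse. Then `py` is strictly longer than
`xy`, so in the triangle `p x y` the altitude from `x` is strictly shorter than the altitude from
`p`, contradicting minimality.

Only squared lengths and areas are compared, so any positive definite symmetric bilinear form over
an ordered field can play the role of the Euclidean inner product, and every vector space over such
a field carries one.
-/

section Collinear

variable {k E P : Type*} [DivisionRing k] [AddCommGroup E] [Module k E] [AddTorsor E P]

lemma exists_not_collinear_triple {S : Set P} (hS : ¬ Collinear k S) :
    ∃ p ∈ S, ∃ a ∈ S, ∃ b ∈ S, ¬ Collinear k {p, a, b} := by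
  by_contra! hcol
  obtain hsub | ⟨a, ha, b, hb, hab⟩ := S.subsingleton_or_nontrivial
  · exact hS (hsub.induction_on (collinear_empty k P) (collinear_singleton k))
  · refine hS ((collinear_iff_of_mem ha).2 ⟨b -ᵥ a, fun p hp ↦ ?_⟩)
    have hpab : p ∈ line[k, a, b] :=
      (hcol p hp a ha b hb).mem_affineSpan_of_mem_of_ne (by simp) (by simp) (by simp) hab
    obtain ⟨r, rfl⟩ := mem_affineSpan_pair_iff_exists_lineMap_eq.1 hpab
    exact ⟨r, AffineMap.lineMap_apply a b r⟩

lemma not_collinear_of_mem_line {p a b x y : P} (hp : ¬ Collinear k {p, a, b})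
    (hx : x ∈ line[k, a, b]) (hy : y ∈ line[k, a, b]) (hxy : x ≠ y) :
    ¬ Collinear k {p, x, y} := fun hcol ↦
  have hpxy : p ∈ line[k, x, y] :=
    hcol.mem_affineSpan_of_mem_of_ne (by simp) (by simp) (by simp) hxy
  hp (collinear_insert_of_mem_affineSpan_pair (affineSpan_pair_le_of_mem_of_mem hx hy hpxy))

lemma linearIndependent_vsub_of_not_collinear {p a b : P} (h : ¬ Collinear k {p, a, b}) :
    LinearIndependent k ![a -ᵥ p, b -ᵥ p] := by
  refine (LinearIndependent.pair_iff' (vsub_ne_zero.2 (ne₁₂_of_not_collinear h).symm)).2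
    fun r hr ↦ h ?_
  have hb : b = AffineMap.lineMap p a r := by
    rw [AffineMap.lineMap_apply, hr, vsub_vadd]
  have hbpa : Collinear k {b, p, a} :=
    collinear_insert_of_mem_affineSpan_pair (hb ▸ AffineMap.lineMap_mem_affineSpan_pair r p a)
  rwa [Set.insert_comm, Set.pair_comm] at hbpa

end Collinear

section CommRing

variable {k E P : Type*} [CommRing k] [AddCommGroup E] [Module k E] [AddTorsor E P]

/-- The Gram determinant of two vectors for the bilinear form `B`: the squared area of the
parallelogram they span. -/
def gramDet (B : LinearMap.BilinForm k E) (u v : E) : k :=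
  B u u * B v v - B u v ^ 2

variable {B : LinearMap.BilinForm k E}

lemma gramDet_smul_add (hB : B.IsSymm) (r s : k) (u w : E) :
    gramDet B (r • w + u) (s • w + u) = (s - r) ^ 2 * gramDet B u (w + u) := by
  simp only [gramDet, map_add, map_smul, LinearMap.add_apply, LinearMap.smul_apply, smul_eq_mul,
    hB.eq w u]
  ring

lemma gramDet_vsub_swap (hB : B.IsSymm) (p x y : P) :
    gramDet B (p -ᵥ x) (y -ᵥ x) = gramDet B (x -ᵥ p) (y -ᵥ p) := by
  rw [← neg_vsub_eq_vsub_rev x p, ← vsub_sub_vsub_cancel_right y x p]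
  simp only [gramDet, map_neg, map_sub, LinearMap.neg_apply, LinearMap.sub_apply,
    hB.eq (y -ᵥ p) (x -ᵥ p)]
  ring

end CommRing

section Field

variable {k E P : Type*} [Field k] [AddCommGroup E] [Module k E] [AddTorsor E P]

/-- The squared length, for the bilinear form `B`, of the altitude from `p` in the triangle
`p a b`, encoded as squared area over squared base so that no square roots are needed.
It is the junk value `0` when `a = b`. -/
def altitudeSq (B : LinearMap.BilinForm k E) (p a b : P) : k :=
  gramDet B (a -ᵥ p) (b -ᵥ p) / B (b -ᵥ a) (b -ᵥ a)

lemma altitudeSq_eq_of_mem_line {B : LinearMap.BilinForm k E} (hB : B.IsSymm) {a b x y : P}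
    (p : P) (hx : x ∈ line[k, a, b]) (hy : y ∈ line[k, a, b]) (hxy : x ≠ y) :
    altitudeSq B p x y = altitudeSq B p a b := by
  obtain ⟨r, rfl⟩ := mem_affineSpan_pair_iff_exists_lineMap_eq.1 hx
  obtain ⟨s, rfl⟩ := mem_affineSpan_pair_iff_exists_lineMap_eq.1 hy
  have hrs : (s - r) ^ 2 ≠ 0 := pow_ne_zero 2 (sub_ne_zero.2 fun h ↦ hxy (by rw [h]))
  have hpoint (t : k) : AffineMap.lineMap a b t -ᵥ p = t • (b -ᵥ a) + (a -ᵥ p) := by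
    rw [AffineMap.lineMap_apply, vadd_vsub_assoc]
  have hbp : b -ᵥ p = (b -ᵥ a) + (a -ᵥ p) := (vsub_add_vsub_cancel b a p).symm
  have hbase : AffineMap.lineMap a b s -ᵥ AffineMap.lineMap a b r = (s - r) • (b -ᵥ a) := by
    rw [← vsub_sub_vsub_cancel_right _ _ p, hpoint, hpoint, add_sub_add_right_eq_sub, ← sub_smul]
  rw [altitudeSq, altitudeSq, hpoint, hpoint, gramDet_smul_add hB, ← hbp, hbase, map_smul,
    map_smul, LinearMap.smul_apply, smul_smul, smul_eq_mul, ← sq, mul_div_mul_left _ _ hrs]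

end Field

section OrderedRing

variable {k E P : Type*} [Ring k] [LinearOrder k] [IsOrderedRing k]
  [AddCommGroup E] [Module k E] [AddTorsor E P]

lemma map_vsub_nonpos_or_of_wbtw {a x b : P} (h : Wbtw k a x b) (f : E →ₗ[k] k) :
    f (a -ᵥ x) ≤ 0 ∨ f (b -ᵥ x) ≤ 0 := by
  obtain ⟨t, ⟨ht0, ht1⟩, rfl⟩ := h
  have ha : f (a -ᵥ AffineMap.lineMap a b t) = -(t * f (b -ᵥ a)) := by
    rw [AffineMap.left_vsub_lineMap, ← neg_vsub_eq_vsub_rev b a, smul_neg, map_neg, map_smul,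
      smul_eq_mul]
  have hb : f (b -ᵥ AffineMap.lineMap a b t) = (1 - t) * f (b -ᵥ a) := by
    rw [AffineMap.right_vsub_lineMap, map_smul, smul_eq_mul]
  rw [ha, hb]
  exact (le_total 0 (f (b -ᵥ a))).imp (fun h ↦ neg_nonpos.2 (mul_nonneg ht0 h))
    (fun h ↦ mul_nonpos_of_nonneg_of_nonpos (sub_nonneg.2 ht1) h)

end OrderedRing

section OrderedField

variable {k E P : Type*} [Field k] [LinearOrder k] [IsStrictOrderedRing k]
  [AddCommGroup E] [Module k E] [AddTorsor E P]

variable (k E) in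
lemma exists_isSymm_posDef_bilinForm :
    ∃ B : LinearMap.BilinForm k E, B.IsSymm ∧ ∀ u, u ≠ 0 → 0 < B u u := by
  let b := Module.Basis.ofVectorSpace k E
  let B : LinearMap.BilinForm k E := b.constr k b.coord
  have hdiag (u : E) : B u u = ∑ i ∈ (b.repr u).support, b.repr u i * b.repr u i := by
    simp [B, Module.Basis.constr_apply, Finsupp.sum, LinearMap.sum_apply]
  refine ⟨B, ?_, fun u hu ↦ ?_⟩
  · refine (LinearMap.BilinForm.isSymm_iff_basis b).2 fun i j ↦ ?_
    classical simp [B, Finsupp.single_apply, eq_comm]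
  · rw [hdiag]
    refine Finset.sum_pos (fun i hi ↦ mul_self_pos.2 (Finsupp.mem_support_iff.1 hi)) ?_
    exact Finsupp.support_nonempty_iff.2 (b.repr.map_ne_zero_iff.2 hu)

variable {B : LinearMap.BilinForm k E}

lemma gramDet_vsub_pos (hB : B.IsSymm) (hpos : ∀ u, u ≠ 0 → 0 < B u u) {p a b : P}
    (h : ¬ Collinear k {p, a, b}) : 0 < gramDet B (a -ᵥ p) (b -ᵥ p) :=
  sub_pos.2 ((B.apply_sq_lt_iff_linearIndependent_of_symm hpos ⟨hB.eq⟩ _ _).2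
    (linearIndependent_vsub_of_not_collinear h))

lemma altitudeSq_lt_of_nonacute (hB : B.IsSymm) (hpos : ∀ u, u ≠ 0 → 0 < B u u) {p x y : P}
    (h : ¬ Collinear k {p, x, y}) (hangle : B (p -ᵥ x) (y -ᵥ x) ≤ 0) :
    altitudeSq B x p y < altitudeSq B p x y := by
  have hpx : 0 < B (p -ᵥ x) (p -ᵥ x) := hpos _ (vsub_ne_zero.2 (ne₁₂_of_not_collinear h))
  have hxy : 0 < B (y -ᵥ x) (y -ᵥ x) := hpos _ (vsub_ne_zero.2 (ne₂₃_of_not_collinear h).symm)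
  have hcosines : B (y -ᵥ p) (y -ᵥ p) =
      B (p -ᵥ x) (p -ᵥ x) + B (y -ᵥ x) (y -ᵥ x) - 2 * B (p -ᵥ x) (y -ᵥ x) := by
    rw [← vsub_sub_vsub_cancel_right y p x]
    simp only [map_sub, LinearMap.sub_apply, hB.eq (y -ᵥ x) (p -ᵥ x)]
    ring
  rw [altitudeSq, altitudeSq, gramDet_vsub_swap hB]
  exact div_lt_div_of_pos_left (gramDet_vsub_pos hB hpos h) hxy (by linarith)

lemma exists_nonacute_of_collinear (B : LinearMap.BilinForm k E) {a b c : P} (p : P)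
    (h : Collinear k {a, b, c}) (hab : a ≠ b) (hac : a ≠ c) (hbc : b ≠ c) :
    ∃ x ∈ ({a, b, c} : Set P), ∃ y ∈ ({a, b, c} : Set P),
      x ≠ y ∧ B (p -ᵥ x) (y -ᵥ x) ≤ 0 := by
  obtain hw | hw | hw := h.wbtw_or_wbtw_or_wbtw
  · obtain hle | hle := map_vsub_nonpos_or_of_wbtw hw (B (p -ᵥ b))
    exacts [⟨b, by simp, a, by simp, hab.symm, hle⟩, ⟨b, by simp, c, by simp, hbc, hle⟩]
  · obtain hle | hle := map_vsub_nonpos_or_of_wbtw hw (B (p -ᵥ c))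
    exacts [⟨c, by simp, b, by simp, hbc.symm, hle⟩, ⟨c, by simp, a, by simp, hac.symm, hle⟩]
  · obtain hle | hle := map_vsub_nonpos_or_of_wbtw hw (B (p -ᵥ a))
    exacts [⟨a, by simp, c, by simp, hac, hle⟩, ⟨a, by simp, b, by simp, hab, hle⟩]

lemma exists_altitudeSq_lt (hB : B.IsSymm) (hpos : ∀ u, u ≠ 0 → 0 < B u u) {p a b c : P}
    (hp : ¬ Collinear k {p, a, b}) (hc : Collinear k {a, b, c}) (hca : c ≠ a) (hcb : c ≠ b) :
    ∃ x ∈ ({a, b, c} : Set P), ∃ y ∈ ({a, b, c} : Set P),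
      ¬ Collinear k {x, p, y} ∧ altitudeSq B x p y < altitudeSq B p a b := by
  have hab : a ≠ b := ne₂₃_of_not_collinear hp
  have hline {z : P} (hz : z ∈ ({a, b, c} : Set P)) : z ∈ line[k, a, b] :=
    hc.mem_affineSpan_of_mem_of_ne (by simp) (by simp) hz hab
  obtain ⟨x, hx, y, hy, hxy, hangle⟩ :=
    exists_nonacute_of_collinear B p hc hab hca.symm hcb.symm
  have hpxy : ¬ Collinear k {p, x, y} := not_collinear_of_mem_line hp (hline hx) (hline hy) hxy
  refine ⟨x, hx, y, hy, by rwa [Set.insert_comm], ?_⟩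
  calc altitudeSq B x p y < altitudeSq B p x y := altitudeSq_lt_of_nonacute hB hpos hpxy hangle
    _ = altitudeSq B p a b := altitudeSq_eq_of_mem_line hB p (hline hx) (hline hy) hxy

theorem gallai_sylvester_general {S : Set P} (hfin : S.Finite) (hS : ¬ Collinear k S) :
    ∃ a ∈ S, ∃ b ∈ S, a ≠ b ∧ ∀ c ∈ S, Collinear k {a, b, c} → c = a ∨ c = b := by
  obtain ⟨B, hB, hpos⟩ := exists_isSymm_posDef_bilinForm k E
  let triples : Set (P × P × P) := {t ∈ S ×ˢ S ×ˢ S | ¬ Collinear k {t.1, t.2.1, t.2.2}}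
  have htriples : triples.Finite := (hfin.prod (hfin.prod hfin)).sep _
  obtain ⟨p₀, hp₀, a₀, ha₀, b₀, hb₀, h₀⟩ := exists_not_collinear_triple hS
  obtain ⟨⟨p, a, b⟩, ⟨⟨hp, ha, hb⟩, hpab⟩, hmin⟩ :=
    Set.exists_min_image triples (fun t ↦ altitudeSq B t.1 t.2.1 t.2.2) htriples
      ⟨(p₀, a₀, b₀), ⟨hp₀, ha₀, hb₀⟩, h₀⟩
  refine ⟨a, ha, b, hb, ne₂₃_of_not_collinear hpab, fun c hc hcol ↦ ?_⟩
  by_contra! hne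
  obtain ⟨x, hx, y, hy, hxpy, hlt⟩ := exists_altitudeSq_lt hB hpos hpab hcol hne.1 hne.2
  have habc : ({a, b, c} : Set P) ⊆ S := by simp [Set.insert_subset_iff, ha, hb, hc]
  exact (hmin (x, p, y) ⟨⟨habc hx, hp, habc hy⟩, hxpy⟩).not_gt hlt

end OrderedField

/-- **Gallai–Sylvester.** Every finite set of at least `3`
points in the plane, not all on a line, spans a simple line. -/
theorem gallai_sylvester (V : Set (ℝ × ℝ)) (hfin : V.Finite)
    (h3 : 3 ≤ V.ncard) (hline : ¬ Collinear ℝ V) :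
    ∃ a ∈ V, ∃ b ∈ V, a ≠ b ∧
      ∀ c ∈ V, Collinear ℝ ({a, b, c} : Set (ℝ × ℝ)) → c = a ∨ c = b :=
  gallai_sylvester_general hfin hline
end
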